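/- Let V ⊆ [0,1] be compact with respect to the topology induced by the metric d_G, let D be an ultrafilter on a set I, let (M_i) be a family of nonempty sets indexed by I, and for each i let ψ_i : M_i → V. Suppose a ∈ [0,1] satisfies: the family i ↦ sup_{c ∈ M_i} ψ_i(c) converges to a along D (with respect to the d_G topology), and L : (Π_{i∈I} M_i) → [0,1] satisfies: for every b ∈ Π_{i∈I} M_i, the family i ↦ ψ_i(b_i) converges to L(b) along D (with respect to the d_G topology). Then a = sup_{b ∈ Π_{i∈I} M_i} L(b). -/

import Mathlib

open unitInterval

/-- The Gödel metric on `[0,1]`: `d_G(x,y) = max{x,y}` for `x ≠ y`, `d_G(x,x) = 0`. -/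
noncomputable def dG (x y : I) : ℝ :=
  if x = y then 0 else max (x : ℝ) (y : ℝ)

/-- The topology on `[0,1]` induced by the metric `d_G`
(generated by the open `d_G`-balls). -/
noncomputable def godelTop : TopologicalSpace I :=
  TopologicalSpace.generateFrom {U : Set I | ∃ (a : I) (r : ℝ), U = {y : I | dG a y < r}}

instance : Fact ((0:ℝ) ≤ 1) := ⟨zero_le_one⟩

/- The `d_G`-topology refines the Euclidean one, so both limits may be read in the order
topology of `[0,1]`. There `L b ≤ a`, since `ψ i (b i) ≤ ⨆ c, ψ i c`. Conversely, any `w < a` is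
eventually below `⨆ c, ψ i c`, hence below a value of `ψ i`; collecting these witnesses into a
single point `b` of the product keeps `L b` from dropping below `w`. -/

section LinearOrder

variable {ι α : Type*} [LinearOrder α] {F : Filter ι} {M : ι → Type*} [∀ i, Nonempty (M i)]
  {ψ : ∀ i, M i → α} {s : ι → α}

theorem exists_pi_eventually_lt_of_isLUB {w : α} (hs : ∀ i, IsLUB (Set.range (ψ i)) (s i))
    (hw : ∀ᶠ i in F, w < s i) : ∃ b : ∀ i, M i, ∀ᶠ i in F, w < ψ i (b i) :=
  Filter.skolem.1 <| hw.mono fun i hi => Set.exists_range_iff.1 <| (lt_isLUB_iff (hs i)).1 hi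

theorem godel_los_forall_step_general [TopologicalSpace α] [OrderClosedTopology α] [F.NeBot]
    {a : α} {L : (∀ i, M i) → α} (hs : ∀ i, IsLUB (Set.range (ψ i)) (s i))
    (ha : Filter.Tendsto s F (nhds a))
    (hL : ∀ b : ∀ i, M i, Filter.Tendsto (fun i => ψ i (b i)) F (nhds (L b))) :
    IsLUB (Set.range L) a := by
  refine ⟨Set.forall_mem_range.2 fun b => ?_, fun u hu => ?_⟩
  · exact le_of_tendsto_of_tendsto' (hL b) ha fun i => (hs i).1 ⟨b i, rfl⟩
  · by_contra! hua
    -- Taking `v` and `w` apart, rather than one point of `(u, a)`, covers the case `u ⋖ a`.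
    obtain ⟨v, huv, w, hwa, hvw⟩ := hua.exists_disjoint_Iio_Ioi
    obtain ⟨b, hwb⟩ := exists_pi_eventually_lt_of_isLUB hs (ha.eventually_const_lt hwa)
    have hLv : L b < v := (hu ⟨b, rfl⟩).trans_lt huv
    obtain ⟨i, hiv, hwi⟩ := (((hL b).eventually_lt_const hLv).and hwb).exists
    exact (hvw _ hiv _ hwi).false

end LinearOrder

theorem dist_le_dG (x y : I) : dist x y ≤ dG x y := by
  unfold dG
  split_ifs with hxy
  · exact (dist_eq_zero.2 hxy).le
  · exact abs_sub_le_of_nonneg_of_le x.2.1 (le_max_left _ _) y.2.1 (le_max_right _ _)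

theorem godelTop_le : godelTop ≤ (inferInstance : TopologicalSpace I) := by
  refine le_of_nhds_le_nhds fun a => Metric.nhds_basis_ball.ge_iff.2 fun r hr => ?_
  have hopen : @IsOpen I godelTop {y | dG a y < r} :=
    TopologicalSpace.isOpen_generateFrom_of_mem ⟨a, r, rfl⟩
  have hmem : {y | dG a y < r} ∈ @nhds I godelTop a :=
    @IsOpen.mem_nhds I godelTop a _ hopen (by simpa [dG] using hr)
  filter_upwards [hmem] with y hy
  exact Metric.mem_ball'.2 ((dist_le_dG a y).trans_lt hy)

/-- The universal-quantifier step of the Łoś theorem for first-order Gödel logic: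
if `sup_{c ∈ M_i} ψ_i(c)` converges to `a` along the ultrafilter `D` and, for every
`b ∈ Π_i M_i`, `ψ_i(b_i)` converges to `L(b)` along `D` (all limits taken in the
`d_G`-topology, with values of `ψ` in a `d_G`-compact set `V`), then
`a = sup_{b} L(b)`. -/
theorem godel_los_forall_step {ι : Type*} (V : Set I)
    (hV : @IsCompact I godelTop V)
    (D : Ultrafilter ι) (M : ι → Type*) [∀ i, Nonempty (M i)]
    (ψ : ∀ i, M i → I) (hψ : ∀ (i : ι) (c : M i), ψ i c ∈ V)
    (a : I)
    (ha : Filter.Tendsto (fun i => ⨆ c : M i, ψ i c) (D : Filter ι) (@nhds I godelTop a))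
    (L : (∀ i, M i) → I)
    (hL : ∀ b : ∀ i, M i,
      Filter.Tendsto (fun i => ψ i (b i)) (D : Filter ι) (@nhds I godelTop (L b))) :
    a = ⨆ b : ∀ i, M i, L b := by
  have hmono : ∀ x : I, @nhds I godelTop x ≤ nhds x := fun _ => nhds_mono godelTop_le
  exact (godel_los_forall_step_general (fun _ => isLUB_iSup) (ha.mono_right (hmono a))
    fun b => (hL b).mono_right (hmono (L b))).iSup_eq.symm
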